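/- Let Z and W be measurable spaces, let P_Z be a probability measure on Z, let n ≥ 1, and let Q : Z^n → P(W) be a Markov kernel. Let f : Z^n × W → ℝ be measurable and set ξ = ∫∫ exp(f(D,w)) Q(D)(dw) (P_Z^{⊗n})(dD), assumed finite. Then for every δ ∈ (0,1), with P_Z^{⊗n}-probability at least 1−δ over the draw of D, the following holds simultaneously for every probability measure ρ on W with ρ ≪ Q(D), f(D,·) ρ-integrable, and KL(ρ‖Q(D)) < ∞: ∫ f(D,w) ρ(dw) − KL(ρ‖Q(D)) ≤ log(ξ/δ). -/

import Mathlib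

open MeasureTheory ProbabilityTheory

/-- Uniform high-probability change-of-measure inequality (proof of Lemma 3.1,
before the final Jensen step).  `Q` is a Markov kernel from `Z^n` to `W` (the
data-dependent prior), `f` is measurable, and
`ξ = ∫∫ exp (f D w) Q(D)(dw) (P_Z^{⊗n})(dD)` is assumed finite (encoded by `hξ`).
With probability at least `1 − δ` over `D ~ P_Z^{⊗n}`, simultaneously for every
probability measure `ρ ≪ Q D` with `f (D, ·)` `ρ`-integrable and finite KL
divergence `KL(ρ‖Q D) = ∫ llr ρ (Q D) dρ`, we have
`∫ f(D,·) dρ − KL(ρ‖Q D) ≤ log (ξ/δ)`. -/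
theorem pac_bayes_change_of_measure_uniform
    {Z W : Type*} [MeasurableSpace Z] [MeasurableSpace W]
    (PZ : Measure Z) [IsProbabilityMeasure PZ]
    (n : ℕ) (hn : 1 ≤ n)
    (Q : ProbabilityTheory.Kernel (Fin n → Z) W) [ProbabilityTheory.IsMarkovKernel Q]
    (f : (Fin n → Z) → W → ℝ)
    (hf : Measurable (fun p : (Fin n → Z) × W => f p.1 p.2))
    (ξ : ℝ)
    (hξ : ENNReal.ofReal ξ =
      ∫⁻ D, ∫⁻ w, ENNReal.ofReal (Real.exp (f D w)) ∂(Q D)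
        ∂(Measure.pi fun _ : Fin n => PZ))
    (δ : ℝ) (hδ0 : 0 < δ) (hδ1 : δ < 1) :
    ENNReal.ofReal (1 - δ) ≤
      (Measure.pi fun _ : Fin n => PZ)
        {D | ∀ ρ : Measure W, IsProbabilityMeasure ρ →
          ρ ≪ Q D →
          Integrable (fun w => f D w) ρ →
          Integrable (llr ρ (Q D)) ρ →
          (∫ w, f D w ∂ρ) - (∫ w, llr ρ (Q D) w ∂ρ) ≤ Real.log (ξ / δ)} := by
  have hfD : ∀ D, Measurable (f D) := fun D => hf.comp measurable_prodMk_left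
  set P : Measure (Fin n → Z) := Measure.pi fun _ : Fin n => PZ with hP
  set g : (Fin n → Z) → ENNReal := fun D => ∫⁻ w, ENNReal.ofReal (Real.exp (f D w)) ∂(Q D)
    with hg
  have hgm : Measurable g := by
    have h : Measurable (fun p : (Fin n → Z) × W => ENNReal.ofReal (Real.exp (f p.1 p.2))) :=
      (Real.measurable_exp.comp hf).ennreal_ofReal
    exact Measurable.lintegral_kernel_prod_right h
  have hgpos : ∀ D, 0 < g D := by
    intro D
    rw [pos_iff_ne_zero]
    intro h0
    have h1 := (lintegral_eq_zero_iff ((hfD D).exp.ennreal_ofReal)).1 h0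
    obtain ⟨w, hw⟩ := h1.exists
    have := Real.exp_pos (f D w)
    simp only [Pi.zero_apply, ENNReal.ofReal_eq_zero] at hw
    linarith
  have hξpos : 0 < ξ := by
    by_contra hneg
    rw [ENNReal.ofReal_of_nonpos (not_lt.1 hneg)] at hξ
    have h1 := (lintegral_eq_zero_iff hgm).1 hξ.symm
    obtain ⟨D, hD⟩ := h1.exists
    exact (hgpos D).ne' hD
  have hξδ : 0 < ξ / δ := div_pos hξpos hδ0
  have hbad : P {D | ENNReal.ofReal (ξ / δ) ≤ g D} ≤ ENNReal.ofReal δ := by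
    have h := meas_ge_le_lintegral_div (μ := P) hgm.aemeasurable
      (ε := ENNReal.ofReal (ξ / δ)) (by simpa using hξδ) ENNReal.ofReal_ne_top
    rw [← hξ, ← ENNReal.ofReal_div_of_pos hξδ] at h
    have e : ξ / (ξ / δ) = δ := by field_simp
    rwa [e] at h
  have hms : MeasurableSet {D | ENNReal.ofReal (ξ / δ) ≤ g D} :=
    measurableSet_le measurable_const hgm
  have hgood : ENNReal.ofReal (1 - δ) ≤ P {D | ENNReal.ofReal (ξ / δ) ≤ g D}ᶜ := by
    rw [prob_compl_eq_one_sub hms, ENNReal.ofReal_sub _ hδ0.le, ENNReal.ofReal_one]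
    exact tsub_le_tsub_left hbad 1
  refine hgood.trans (measure_mono ?_)
  intro D hD ρ hρ hac hfi hli
  have hlt : g D < ENNReal.ofReal (ξ / δ) := not_le.1 hD
  have hei : Integrable (fun w => Real.exp (f D w)) (Q D) := by
    refine ⟨(hfD D).exp.aestronglyMeasurable, ?_⟩
    rw [hasFiniteIntegral_iff_ofReal (Filter.Eventually.of_forall fun w => (Real.exp_pos _).le)]
    exact hlt.trans ENNReal.ofReal_lt_top
  have hint : ENNReal.ofReal (∫ w, Real.exp (f D w) ∂(Q D)) = g D :=
    ofReal_integral_eq_lintegral_ofReal hei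
      (Filter.Eventually.of_forall fun w => (Real.exp_pos _).le)
  have hle : ∫ w, Real.exp (f D w) ∂(Q D) ≤ ξ / δ := by
    rw [← hint] at hlt
    exact ((ENNReal.ofReal_lt_ofReal_iff hξδ).1 hlt).le
  have hipos : 0 < ∫ w, Real.exp (f D w) ∂(Q D) := by
    have := hgpos D
    rw [← hint] at this
    exact ENNReal.ofReal_pos.1 this
  have hlog := Real.log_le_log hipos hle
  have : IsProbabilityMeasure ((Q D).tilted (f D)) := isProbabilityMeasure_tilted hei
  have h1 := InformationTheory.integral_llr_add_sub_measure_univ_nonneg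
    (hac.trans (absolutelyContinuous_tilted hei)) (integrable_llr_tilted_right hac hfi hli hei)
  rw [integral_llr_tilted_right hac hfi hei hli] at h1
  simp only [probReal_univ] at h1
  linarith
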